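/- The following three statements are equivalent for a matching problem with normal form S*: (a) the matching problem has exactly one stable matching; (b) the digraph D(S*) contains no directed cycle; (c) every worker belongs to exactly one pair of S* and every firm belongs to exactly one pair of S*. -/

import Mathlib

/-- `(w,f)` blocks the matching `μ`: `f ≻_w μ(w)` and `w ≻_f μ⁻¹(f)`.
`prefW w f f'` means worker `w` strictly prefers firm `f` to firm `f'`;
`prefF f w w'` means firm `f` strictly prefers worker `w` to worker `w'`. -/
def Blocks {W F : Type*} (prefW : W → F → F → Prop) (prefF : F → W → W → Prop)
    (μ : W ≃ F) (w : W) (f : F) : Prop :=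
  prefW w f (μ w) ∧ prefF f w (μ.symm f)

/-- A matching is stable if no pair blocks it. -/
def IsStableMatching {W F : Type*} (prefW : W → F → F → Prop)
    (prefF : F → W → W → Prop) (μ : W ≃ F) : Prop :=
  ∀ w f, ¬ Blocks prefW prefF μ w f

/-- A pair `(w,f)` is unattractive in `S`. -/
def Unattractive {W F : Type*} (prefW : W → F → F → Prop) (prefF : F → W → W → Prop)
    (S : Set (W × F)) (w : W) (f : F) : Prop :=
  (∃ f', (w, f') ∈ S ∧ prefW w f' f ∧
      ∀ w', w' ≠ w → (w', f') ∈ S → prefF f' w w') ∨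
  (∃ w', (w', f) ∈ S ∧ prefF f w' w ∧
      ∀ f'', f'' ≠ f → (w', f'') ∈ S → prefW w' f f'')

/-- `delta S` is `S` with all pairs unattractive in `S` removed. -/
def delta {W F : Type*} (prefW : W → F → F → Prop) (prefF : F → W → W → Prop)
    (S : Set (W × F)) : Set (W × F) :=
  {p ∈ S | ¬ Unattractive prefW prefF S p.1 p.2}

/-- The normal form: the fixed point of `delta` reached by iterating from `W × F`.
Since `delta S ⊆ S` and `W × F` is finite, `Fintype.card (W × F)` iterations suffice. -/
def NormalForm (W F : Type*) [Fintype W] [Fintype F]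
    (prefW : W → F → F → Prop) (prefF : F → W → W → Prop) : Set (W × F) :=
  (delta prefW prefF)^[Fintype.card (W × F)] Set.univ

/-- `μ` is `S`-stable: `S`-admissible and no pair of `S` blocks it within `S`. -/
def SStable {W F : Type*} (prefW : W → F → F → Prop) (prefF : F → W → W → Prop)
    (S : Set (W × F)) (μ : W ≃ F) : Prop :=
  (∀ w, (w, μ w) ∈ S) ∧
  ∀ w f, (w, f) ∈ S → ¬ (prefW w f (μ w) ∧ prefF f w (μ.symm f))

/-- Arcs of the matching digraph `D(S)`: from `(w,f)` to `(w,f')` whenever `f' ≻_w f`,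
and from `(w,f)` to `(w',f)` whenever `w' ≻_f w`. -/
def Arc {W F : Type*} (prefW : W → F → F → Prop) (prefF : F → W → W → Prop)
    (S : Set (W × F)) (p q : W × F) : Prop :=
  p ∈ S ∧ q ∈ S ∧
    ((p.1 = q.1 ∧ prefW p.1 q.2 p.2) ∨ (p.2 = q.2 ∧ prefF p.2 q.1 p.1))

/-- `D(S)` contains a directed cycle: distinct vertices `c 0, …, c (n-1)` with `n ≥ 1`,
`c n = c 0`, and an arc from each vertex to the next. -/
def HasDirectedCycle {W F : Type*} (prefW : W → F → F → Prop)
    (prefF : F → W → W → Prop) (S : Set (W × F)) : Prop :=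
  ∃ (n : ℕ) (c : Fin (n + 1) → W × F), 0 < n ∧
    Function.Injective (fun i : Fin n => c i.castSucc) ∧
    c (Fin.last n) = c 0 ∧
    ∀ i : Fin n, Arc prefW prefF S (c i.castSucc) (c i.succ)

/-- The preference lists possess a cycle: there are `k ≥ 2`, distinct workers
`w_1, …, w_k` and distinct firms `f_1, …, f_k` (indexed by `ZMod k`) with
`f_{j+1} ≻_{w_j} f_j` and `w_j ≻_{f_j} w_{j-1}` for all `j`, indices modulo `k`. -/
def PrefCycle {W F : Type*} (prefW : W → F → F → Prop)
    (prefF : F → W → W → Prop) : Prop :=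
  ∃ k : ℕ, 2 ≤ k ∧ ∃ (ws : ZMod k → W) (fs : ZMod k → F),
    Function.Injective ws ∧ Function.Injective fs ∧
    ∀ j : ZMod k, prefW (ws j) (fs (j + 1)) (fs j) ∧ prefF (fs j) (ws j) (ws (j - 1))

section

variable {W F : Type*} {prefW : W → F → F → Prop} {prefF : F → W → W → Prop} {S : Set (W × F)}

theorem exists_best {α : Type*} [Finite α] (r : α → α → Prop) [IsStrictTotalOrder α r]
    {P : α → Prop} (h : ∃ a, P a) : ∃ a, P a ∧ ∀ b, b ≠ a → P b → r a b := by
  obtain ⟨a, ha, hmin⟩ := (Finite.wellFounded_of_trans_of_irrefl r).has_min {a | P a} h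
  refine ⟨a, ha, fun b hb hPb => ?_⟩
  rcases trichotomous_of r a b with h | h | h
  · exact h
  · exact absurd h.symm hb
  · exact absurd h (hmin b hPb)

/-! ### Exchanging the roles of workers and firms -/

theorem unattractive_swap {w : W} {f : F} :
    Unattractive prefF prefW (Prod.swap ⁻¹' S) f w ↔ Unattractive prefW prefF S w f :=
  or_comm

theorem delta_swap :
    delta prefF prefW (Prod.swap ⁻¹' S) = Prod.swap ⁻¹' delta prefW prefF S := by
  ext ⟨f, w⟩
  exact and_congr Iff.rfl (not_congr unattractive_swap)

theorem IsStableMatching.symm {μ : W ≃ F} (h : IsStableMatching prefW prefF μ) :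
    IsStableMatching prefF prefW μ.symm :=
  fun f w hb => h w f ⟨hb.2, hb.1⟩

/-! ### The normal form is exactly the set of pairs that are not unattractive in it -/

theorem delta_subset : delta prefW prefF S ⊆ S := Set.sep_subset _ _

theorem exists_mem_delta_of_best [Finite F] [∀ w, IsStrictTotalOrder F (prefW w)]
    [∀ f, IsStrictTotalOrder W (prefF f)] {w : W} {f : F}
    (h : ∃ f', (w, f') ∈ S ∧ prefW w f' f ∧ ∀ w', w' ≠ w → (w', f') ∈ S → prefF f' w w') :
    ∃ f', (w, f') ∈ delta prefW prefF S ∧ prefW w f' f ∧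
      ∀ w', w' ≠ w → (w', f') ∈ delta prefW prefF S → prefF f' w w' := by
  obtain ⟨f', ⟨hS, hpref, htop⟩, hbest⟩ := exists_best (prefW w) h
  refine ⟨f', ⟨hS, ?_⟩, hpref, fun w' hne hw' => htop w' hne (delta_subset hw')⟩
  rintro (⟨f₂, hS₂, hpref₂, htop₂⟩ | ⟨w', hS', hpref', -⟩)
  · have hne : f₂ ≠ f' := by
      rintro rfl
      exact irrefl_of (prefW w) _ hpref₂
    exact asymm_of (prefW w) hpref₂
      (hbest f₂ hne ⟨hS₂, trans_of (prefW w) hpref₂ hpref, htop₂⟩)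
  · have hne : w' ≠ w := by
      rintro rfl
      exact irrefl_of (prefF f') _ hpref'
    exact asymm_of (prefF f') hpref' (htop w' hne hS')

theorem Unattractive.delta [Finite W] [Finite F] [∀ w, IsStrictTotalOrder F (prefW w)]
    [∀ f, IsStrictTotalOrder W (prefF f)] {w : W} {f : F}
    (h : Unattractive prefW prefF S w f) :
    Unattractive prefW prefF (delta prefW prefF S) w f := by
  rcases h with h | h
  · exact Or.inl (exists_mem_delta_of_best h)
  · have := exists_mem_delta_of_best (prefW := prefF) (prefF := prefW)
      (S := Prod.swap ⁻¹' S) (w := f) (f := w) h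
    rw [delta_swap] at this
    exact Or.inr this

theorem not_mem_iterate_delta [Finite W] [Finite F] [∀ w, IsStrictTotalOrder F (prefW w)]
    [∀ f, IsStrictTotalOrder W (prefF f)] (k : ℕ) {w : W} {f : F}
    (h : (w, f) ∉ (delta prefW prefF)^[k] Set.univ) :
    Unattractive prefW prefF ((delta prefW prefF)^[k] Set.univ) w f := by
  induction k with
  | zero => exact absurd (Set.mem_univ _) h
  | succ k ih =>
    rw [Function.iterate_succ_apply'] at h ⊢
    refine Unattractive.delta ?_
    by_contra hu
    exact hu (ih fun hmem => h ⟨hmem, hu⟩)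

theorem ncard_iterate_delta_add_le [Fintype W] [Fintype F] (k : ℕ) :
    delta prefW prefF ((delta prefW prefF)^[k] Set.univ) = (delta prefW prefF)^[k] Set.univ ∨
      ((delta prefW prefF)^[k] Set.univ).ncard + k ≤ Fintype.card (W × F) := by
  induction k with
  | zero => right; simp [Set.ncard_univ]
  | succ k ih =>
    rw [Function.iterate_succ_apply']
    by_cases heq : delta prefW prefF ((delta prefW prefF)^[k] Set.univ) =
        (delta prefW prefF)^[k] Set.univ
    · left; rw [heq, heq]
    · right
      have hlt := Set.ncard_lt_ncard (delta_subset.ssubset_of_ne heq)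
      have := ih.resolve_left heq
      omega

theorem delta_normalForm [Fintype W] [Fintype F] :
    delta prefW prefF (NormalForm W F prefW prefF) = NormalForm W F prefW prefF := by
  rcases ncard_iterate_delta_add_le (prefW := prefW) (prefF := prefF)
    (Fintype.card (W × F)) with h | h
  · exact h
  · have h0 : NormalForm W F prefW prefF = ∅ :=
      (Set.ncard_eq_zero).1 (by unfold NormalForm; omega)
    rw [h0]
    exact Set.subset_empty_iff.1 delta_subset

theorem mem_normalForm_iff [Fintype W] [Fintype F] [∀ w, IsStrictTotalOrder F (prefW w)]
    [∀ f, IsStrictTotalOrder W (prefF f)] (w : W) (f : F) :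
    (w, f) ∈ NormalForm W F prefW prefF ↔
      ¬ Unattractive prefW prefF (NormalForm W F prefW prefF) w f := by
  refine ⟨fun h => ?_, fun h => ?_⟩
  · rw [← delta_normalForm] at h
    exact h.2
  · by_contra hmem
    exact h (not_mem_iterate_delta _ hmem)

theorem IsStableMatching.mem_normalForm [Fintype W] [Fintype F]
    [∀ w, IsStrictTotalOrder F (prefW w)] [∀ f, IsStrictTotalOrder W (prefF f)]
    {μ : W ≃ F} (hμ : IsStableMatching prefW prefF μ) (w : W) :
    (w, μ w) ∈ NormalForm W F prefW prefF := by
  unfold NormalForm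
  generalize Fintype.card (W × F) = k
  induction k generalizing w with
  | zero => exact Set.mem_univ _
  | succ k ih =>
    rw [Function.iterate_succ_apply']
    refine ⟨ih w, ?_⟩
    rintro (⟨f, -, hpref, htop⟩ | ⟨w', -, hpref, htop⟩)
    · refine hμ w f ⟨hpref, htop _ ?_ (by simpa using ih (μ.symm f))⟩
      rintro rfl
      rw [μ.apply_symm_apply] at hpref
      exact irrefl_of (prefW _) _ hpref
    · refine hμ w' (μ w) ⟨htop _ ?_ (ih w'), by simpa using hpref⟩
      intro h
      rw [μ.injective h] at hpref
      exact irrefl_of (prefF _) _ hpref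

/-! ### Sets that coincide with their pairs that are not unattractive -/

theorem exists_mem_row [Finite W] [Finite F] (hcard : Nat.card W = Nat.card F)
    [∀ w, IsStrictTotalOrder F (prefW w)]
    (hS : ∀ w f, (w, f) ∈ S ↔ ¬ Unattractive prefW prefF S w f) (w : W) :
    ∃ f, (w, f) ∈ S := by
  by_contra! hempty
  have h : ∀ f, ∃ w', (w', f) ∈ S ∧ ∀ f', f' ≠ f → (w', f') ∈ S → prefW w' f f' := by
    intro f
    rcases not_not.1 (mt (hS w f).2 (hempty f)) with ⟨f', hf', -⟩ | ⟨w', hw', -, htop⟩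
    · exact absurd hf' (hempty f')
    · exact ⟨w', hw', htop⟩
  choose g hg htop using h
  have hinj : Function.Injective g := by
    intro f₁ f₂ heq
    by_contra hne
    have h₁ := htop f₁ f₂ (Ne.symm hne) (heq ▸ hg f₂)
    have h₂ := htop f₂ f₁ hne (heq ▸ hg f₁)
    rw [heq] at h₁
    exact asymm_of (prefW _) h₁ h₂
  obtain ⟨f, rfl⟩ := ((Nat.bijective_iff_injective_and_card g).2 ⟨hinj, hcard.symm⟩).2 w
  exact hempty f (hg f)

theorem exists_stable_best [Finite W] [Finite F] (hcard : Nat.card W = Nat.card F)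
    [∀ w, IsStrictTotalOrder F (prefW w)] [∀ f, IsStrictTotalOrder W (prefF f)]
    (hS : ∀ w f, (w, f) ∈ S ↔ ¬ Unattractive prefW prefF S w f) :
    ∃ μ : W ≃ F, IsStableMatching prefW prefF μ ∧
      ∀ w, (w, μ w) ∈ S ∧ ∀ f, f ≠ μ w → (w, f) ∈ S → prefW w (μ w) f := by
  choose g hg htop using fun w => exists_best (prefW w) (exists_mem_row hcard hS w)
  have hinj : Function.Injective g := by
    intro w₁ w₂ heq
    rcases trichotomous_of (prefF (g w₂)) w₁ w₂ with h | h | h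
    · exact absurd (Or.inr ⟨w₁, heq ▸ hg w₁, h, heq ▸ htop w₁⟩) ((hS _ _).1 (hg w₂))
    · exact h
    · rw [← heq] at h
      exact absurd (Or.inr ⟨w₂, heq ▸ hg w₂, h, heq ▸ htop w₂⟩) ((hS _ _).1 (hg w₁))
  let μ : W ≃ F :=
    Equiv.ofBijective g ((Nat.bijective_iff_injective_and_card g).2 ⟨hinj, hcard⟩)
  refine ⟨μ, ?_, fun w => ⟨hg w, htop w⟩⟩
  rintro w f ⟨hw, hf⟩
  have hbest : ∀ f', (w, f') ∈ S → ¬ prefW w f' (μ w) := fun f' hf' hpref => by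
    by_cases heq : f' = μ w
    · exact irrefl_of (prefW w) _ (heq ▸ hpref)
    · exact asymm_of (prefW w) hpref (htop w f' heq hf')
  rcases not_not.1 (mt (hS w f).2 fun hmem => hbest f hmem hw) with
    ⟨f', hf', hpref, -⟩ | ⟨w', hw', hpref, htop'⟩
  · exact hbest f' hf' (trans_of (prefW w) hpref hw)
  · have heq : μ w' = f := by
      by_contra hne
      exact asymm_of (prefW w') (htop' _ hne (hg w')) (htop w' f (Ne.symm hne) hw')
    rw [← heq, μ.symm_apply_apply, heq] at hf
    exact asymm_of (prefF f) hpref hf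

theorem Arc.exists_arc [∀ w, IsStrictTotalOrder F (prefW w)]
    [∀ f, IsStrictTotalOrder W (prefF f)]
    (hS : ∀ w f, (w, f) ∈ S ↔ ¬ Unattractive prefW prefF S w f) {p q : W × F}
    (h : Arc prefW prefF S p q) : ∃ q', Arc prefW prefF S q q' := by
  by_contra! hsink
  obtain ⟨w, f⟩ := p
  obtain ⟨v, g⟩ := q
  obtain ⟨hp, hq, ⟨heq, hpref⟩ | ⟨heq, hpref⟩⟩ := h
  · obtain rfl : w = v := heq
    refine (hS w f).1 hp (Or.inl ⟨g, hq, hpref, fun w₂ hne hw₂ => ?_⟩)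
    rcases trichotomous_of (prefF g) w w₂ with h | h | h
    · exact h
    · exact absurd h.symm hne
    · exact absurd ⟨hq, hw₂, Or.inr ⟨rfl, h⟩⟩ (hsink (w₂, g))
  · obtain rfl : f = g := heq
    refine (hS w f).1 hp (Or.inr ⟨v, hq, hpref, fun f₂ hne hf₂ => ?_⟩)
    rcases trichotomous_of (prefW v) f f₂ with h | h | h
    · exact h
    · exact absurd h.symm hne
    · exact absurd ⟨hq, hf₂, Or.inl ⟨rfl, h⟩⟩ (hsink (v, f₂))

/-- A closed walk contains a directed cycle: one of minimal length has no repeated vertex. -/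
theorem hasDirectedCycle_of_closed_walk
    (h : ∃ n, 0 < n ∧ ∃ c : ℕ → W × F, c n = c 0 ∧
      ∀ i < n, Arc prefW prefF S (c i) (c (i + 1))) :
    HasDirectedCycle prefW prefF S := by
  classical
  obtain ⟨hpos, c, hclosed, harc⟩ := Nat.find_spec h
  have hmin : ∀ i j, i < j → j < Nat.find h → c i ≠ c j := by
    intro i j hij hj heq
    refine Nat.find_min h (m := j - i) (by omega)
      ⟨by omega, fun m => c (i + m), ?_, fun m hm => harc (i + m) (by omega)⟩
    simp only [Nat.add_sub_cancel' hij.le, Nat.add_zero, heq]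
  refine ⟨Nat.find h, fun i => c i, hpos, fun i j hij => ?_, by simpa using hclosed,
    fun i => by simpa using harc i i.2⟩
  rcases lt_trichotomy i j with hlt | heq | hlt
  · exact absurd hij (hmin i j hlt j.2)
  · exact heq
  · exact absurd hij.symm (hmin j i hlt i.2)

theorem Arc.hasDirectedCycle [Finite W] [Finite F]
    [∀ w, IsStrictTotalOrder F (prefW w)] [∀ f, IsStrictTotalOrder W (prefF f)]
    (hS : ∀ w f, (w, f) ∈ S ↔ ¬ Unattractive prefW prefF S w f) {p q : W × F}
    (h : Arc prefW prefF S p q) : HasDirectedCycle prefW prefF S := by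
  choose next hnext using fun x : {x // ∃ y, Arc prefW prefF S x y} => x.2
  let step : {x // ∃ y, Arc prefW prefF S x y} → {x // ∃ y, Arc prefW prefF S x y} :=
    fun x => ⟨next x, (hnext x).exists_arc hS⟩
  let c : ℕ → W × F := fun k => (step^[k] ⟨p, q, h⟩).1
  have harc : ∀ k, Arc prefW prefF S (c k) (c (k + 1)) := fun k => by
    simp only [c, Function.iterate_succ_apply']
    exact hnext _
  obtain ⟨i, j, hij, heq⟩ : ∃ i j, i < j ∧ c i = c j := by
    obtain ⟨i, j, hne, heq⟩ := Finite.exists_ne_map_eq_of_infinite c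
    rcases hne.lt_or_gt with hlt | hlt
    · exact ⟨i, j, hlt, heq⟩
    · exact ⟨j, i, hlt, heq.symm⟩
  refine hasDirectedCycle_of_closed_walk
    ⟨j - i, by omega, fun m => c (i + m), ?_, fun m _ => harc (i + m)⟩
  simp only [Nat.add_sub_cancel' hij.le, Nat.add_zero, heq]

theorem existsUnique_of_forall_not_arc [Finite W] [Finite F] (hcard : Nat.card W = Nat.card F)
    [∀ w, IsStrictTotalOrder F (prefW w)] [∀ f, IsStrictTotalOrder W (prefF f)]
    (hS : ∀ w f, (w, f) ∈ S ↔ ¬ Unattractive prefW prefF S w f)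
    (h : ∀ p q, ¬ Arc prefW prefF S p q) :
    (∀ w, ∃! f, (w, f) ∈ S) ∧ ∀ f, ∃! w, (w, f) ∈ S := by
  refine ⟨fun w => ?_, fun f => ?_⟩
  · obtain ⟨f, hf⟩ := exists_mem_row hcard hS w
    refine ⟨f, hf, fun f' hf' => ?_⟩
    rcases trichotomous_of (prefW w) f' f with hlt | heq | hlt
    · exact absurd ⟨hf, hf', Or.inl ⟨rfl, hlt⟩⟩ (h (w, f) (w, f'))
    · exact heq
    · exact absurd ⟨hf', hf, Or.inl ⟨rfl, hlt⟩⟩ (h (w, f') (w, f))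
  · obtain ⟨w, hw⟩ := exists_mem_row (prefW := prefF) (prefF := prefW)
      (S := Prod.swap ⁻¹' S) hcard.symm
      (fun f w => (hS w f).trans (not_congr unattractive_swap.symm)) f
    refine ⟨w, hw, fun w' hw' => ?_⟩
    rcases trichotomous_of (prefF f) w' w with hlt | heq | hlt
    · exact absurd ⟨hw, hw', Or.inr ⟨rfl, hlt⟩⟩ (h (w, f) (w', f))
    · exact heq
    · exact absurd ⟨hw', hw, Or.inr ⟨rfl, hlt⟩⟩ (h (w', f) (w, f))

theorem not_arc_of_existsUnique [∀ w, IsStrictTotalOrder F (prefW w)]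
    [∀ f, IsStrictTotalOrder W (prefF f)]
    (h : (∀ w, ∃! f, (w, f) ∈ S) ∧ ∀ f, ∃! w, (w, f) ∈ S) (p q : W × F) :
    ¬ Arc prefW prefF S p q := by
  obtain ⟨w, f⟩ := p
  obtain ⟨w', f'⟩ := q
  rintro ⟨hp, hq, ⟨h₁, h₂⟩ | ⟨h₁, h₂⟩⟩
  · obtain rfl : w = w' := h₁
    obtain rfl : f = f' := (h.1 w).unique hp hq
    exact irrefl_of (prefW _) _ h₂
  · obtain rfl : f = f' := h₁
    obtain rfl : w = w' := (h.2 f).unique hp hq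
    exact irrefl_of (prefF _) _ h₂

/-- If the worker-best and firm-best stable matchings agree, the digraph has no arcs. -/
theorem not_arc_of_existsUnique_stable [Finite W] [Finite F] (hcard : Nat.card W = Nat.card F)
    [∀ w, IsStrictTotalOrder F (prefW w)] [∀ f, IsStrictTotalOrder W (prefF f)]
    (hS : ∀ w f, (w, f) ∈ S ↔ ¬ Unattractive prefW prefF S w f)
    (h : ∃! μ : W ≃ F, IsStableMatching prefW prefF μ) (p q : W × F) :
    ¬ Arc prefW prefF S p q := by
  obtain ⟨μ, hμ, hbestW⟩ := exists_stable_best hcard hS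
  obtain ⟨ν, hν, hbestF⟩ := exists_stable_best (prefW := prefF) (prefF := prefW)
    (S := Prod.swap ⁻¹' S) hcard.symm
    (fun f w => (hS w f).trans (not_congr unattractive_swap.symm))
  obtain rfl : ν.symm = μ := h.unique hν.symm hμ
  have heq : ∀ w f, (w, f) ∈ S → f = ν.symm w := by
    intro w f hf
    by_contra hne
    refine (hS w f).1 hf (Or.inl ⟨ν.symm w, (hbestW w).1, (hbestW w).2 f hne hf, ?_⟩)
    intro w' hne' hw'
    simpa using (hbestF (ν.symm w)).2 w' (by simpa using hne') hw'
  obtain ⟨w, f⟩ := p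
  obtain ⟨w', f'⟩ := q
  rintro ⟨hp, hq, ⟨h₁, h₂⟩ | ⟨h₁, h₂⟩⟩
  · obtain rfl : w = w' := h₁
    rw [heq _ _ hp, heq _ _ hq] at h₂
    exact irrefl_of (prefW _) _ h₂
  · obtain rfl : f = f' := h₁
    obtain rfl : w = w' := ν.symm.injective ((heq _ _ hp).symm.trans (heq _ _ hq))
    exact irrefl_of (prefF _) _ h₂

end

/-- The three characterisations of a unique stable matching are equivalent. -/
theorem unique_stable_tfae {W F : Type*} [Fintype W] [Fintype F] [Nonempty W]
    (hcard : Fintype.card W = Fintype.card F)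
    (prefW : W → F → F → Prop) (prefF : F → W → W → Prop)
    (hW : ∀ w, IsStrictTotalOrder F (prefW w))
    (hF : ∀ f, IsStrictTotalOrder W (prefF f)) :
    List.TFAE
      [ (∃! μ : W ≃ F, IsStableMatching prefW prefF μ),
        ¬ HasDirectedCycle prefW prefF (NormalForm W F prefW prefF),
        (∀ w : W, ∃! f : F, (w, f) ∈ NormalForm W F prefW prefF) ∧
          (∀ f : F, ∃! w : W, (w, f) ∈ NormalForm W F prefW prefF) ] := by
  have hcard' : Nat.card W = Nat.card F := by simpa [Nat.card_eq_fintype_card] using hcard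
  have hS := mem_normalForm_iff (prefW := prefW) (prefF := prefF)
  tfae_have 1 → 3 := fun h =>
    existsUnique_of_forall_not_arc hcard' hS (not_arc_of_existsUnique_stable hcard' hS h)
  tfae_have 3 → 2 := fun h ⟨_, _, hn, _, _, harc⟩ => not_arc_of_existsUnique h _ _ (harc ⟨0, hn⟩)
  tfae_have 2 → 3 := fun h =>
    existsUnique_of_forall_not_arc hcard' hS fun _ _ harc => h (harc.hasDirectedCycle hS)
  tfae_have 3 → 1 := fun h => by
    obtain ⟨μ, hμ, -⟩ := exists_stable_best hcard' hS
    exact ⟨μ, hμ, fun ν hν => Equiv.ext fun w =>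
      (h.1 w).unique (hν.mem_normalForm w) (hμ.mem_normalForm w)⟩
  tfae_finish
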